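/- Let F be an algebraically closed field of characteristic 0 and k ≥ 2 an integer. For A₁ ∈ GL₃(F) and A₂ ∈ M₃(F) with r₀ = nullity(A₂), the map (X₁,X₂) ↦ A₁X₁^k + A₂X₂^k is surjective on M₃(F) if and only if k(r₀ − 1) < 3. -/

import Mathlib

/-!
Put `b = a₁⁻¹ a₂` and `W = range b`, so that `codim W = r = dim ker b`. Two endomorphisms with the
same range differ by a unit on the right, and units have `k`-th roots, so `c = x ^ k + b * y ^ k` is
solvable as soon as some `k`-th power `x ^ k` makes `range (c - x ^ k)` equal to `W`.

* If `range c + W = V` or `range c ⊆ W`, such an `x` exists in every dimension. When `r ≤ 1` there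
  is no other case.
* If `k = 2`, `dim W = 1` and `r = 2`, the remaining `c` have rank one modulo `W`, and then an
  explicit square agrees with `c` modulo `W`.
* Conversely, choose `c` inducing on `V / W` a nilpotent endomorphism `g` with `g ^ (r - 1) ≠ 0`.
  If `x ^ k` also induces `g`, then `g ^ m` has range the image of `range (x ^ (k * m))`, which is
  stationary once `k * m ≥ dim V`; as `g` is nilpotent, this forces `k * (r - 1) < dim V`.
-/

open Module LinearMap Submodule

section Roots

open Polynomial

/-- An approximate `k`-th root of a unit is refined to a `k`-th root by Newton's method. -/
theorem exists_pow_eq_of_isNilpotent_pow_sub {R : Type*} [CommRing R] {k : ℕ} {a x : R}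
    (hk : IsUnit (k : R)) (ha : IsUnit a) (hx : IsNilpotent (x ^ k - a)) : ∃ y, y ^ k = a := by
  rcases eq_or_ne k 0 with rfl | hk₀
  · have : Subsingleton R := subsingleton_of_zero_eq_one (isUnit_zero_iff.mp (by simpa using hk))
    exact ⟨0, Subsingleton.elim _ _⟩
  have hx_unit : IsUnit x := by
    rw [← isUnit_pow_iff hk₀, ← sub_add_cancel (x ^ k) a]
    exact hx.isUnit_add_right_of_commute ha (Commute.all _ _)
  obtain ⟨y, ⟨-, hy⟩, -⟩ := existsUnique_nilpotent_sub_and_aeval_eq_zero (P := X ^ k - C a)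
    (x := x) (by simpa using hx) (by simpa [derivative_X_pow] using And.intro hk (hx_unit.pow _))
  exact ⟨y, by simpa [sub_eq_zero] using hy⟩

variable (K : Type*) [Field K] [IsAlgClosed K] {k : ℕ}

theorem exists_pow_eq_of_isReduced {A : Type*} [CommRing A] [Algebra K A] [Module.Finite K A]
    [IsReduced A] (hk : k ≠ 0) (a : A) : ∃ x, x ^ k = a := by
  have : IsArtinianRing A := isArtinian_of_tower K inferInstance
  have exists_root (m : MaximalSpectrum A) :
      ∃ x : A ⧸ m.asIdeal, x ^ k = Ideal.Quotient.mk _ a := by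
    obtain ⟨c, hc⟩ := (IsAlgClosed.algebraMap_bijective_of_isIntegral (k := K)
      (K := A ⧸ m.asIdeal)).surjective (Ideal.Quotient.mk _ a)
    obtain ⟨z, rfl⟩ := IsAlgClosed.exists_pow_nat_eq c (Nat.pos_of_ne_zero hk)
    exact ⟨algebraMap K _ z, by rw [← map_pow, hc]⟩
  choose x hx using exists_root
  refine ⟨(IsArtinianRing.equivPi A).symm x, (IsArtinianRing.equivPi A).injective ?_⟩
  ext m
  rw [map_pow, AlgEquiv.apply_symm_apply, Pi.pow_apply, hx, IsArtinianRing.equivPi_apply]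

theorem exists_pow_eq_of_isUnit_of_commRing {A : Type*} [CommRing A] [Algebra K A]
    [Module.Finite K A] (hk : (k : K) ≠ 0) {a : A} (ha : IsUnit a) : ∃ x, x ^ k = a := by
  have : IsReduced (A ⧸ nilradical A) :=
    (Ideal.isRadical_iff_quotient_reduced _).1 (Ideal.radical_isRadical _)
  obtain ⟨x, hx⟩ := exists_pow_eq_of_isReduced K (A := A ⧸ nilradical A) (k := k)
    (by rintro rfl; exact hk Nat.cast_zero) (Ideal.Quotient.mk _ a)
  obtain ⟨x, rfl⟩ := Ideal.Quotient.mk_surjective x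
  refine exists_pow_eq_of_isNilpotent_pow_sub (x := x) ?_ ha ?_
  · simpa using (IsUnit.mk0 _ hk).map (algebraMap K A)
  · rw [← mem_nilradical, ← Ideal.Quotient.eq, map_pow, hx]

theorem exists_pow_eq_of_isUnit {A : Type*} [Ring A] [Algebra K A] [Module.Finite K A]
    (hk : (k : K) ≠ 0) {a : A} (ha : IsUnit a) : ∃ x, x ^ k = a := by
  let a' : Algebra.adjoin K {a} := ⟨a, Algebra.self_mem_adjoin_singleton K a⟩
  have : IsArtinianRing (Algebra.adjoin K {a}) := isArtinian_of_tower K inferInstance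
  have ha' : IsUnit a' := IsArtinianRing.isUnit_of_mem_nonZeroDivisors <|
    comap_nonZeroDivisors_le_of_injective (f := (Algebra.adjoin K {a}).subtype)
      Subtype.val_injective ha.mem_nonZeroDivisors
  obtain ⟨x, hx⟩ := exists_pow_eq_of_isUnit_of_commRing K hk ha'
  exact ⟨x, congrArg Subtype.val hx⟩

end Roots

section Field

variable {K V U : Type*} [Field K] [AddCommGroup V] [Module K V] [AddCommGroup U] [Module K U]

/-- The witness is `x v = θ (c v) • w + μ v • p`, where `w ∈ W` is nonzero, `θ` vanishes on `W` with
`θ p = 1`, and `μ p = 0`, `μ w = 1`; thus `μ (x v) = θ (c v)`. -/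
theorem exists_range_sub_sq_le {c : End K V} {W : Submodule K V} {p : V} (hW : W ≠ ⊥)
    (hp : p ∉ W) (hc : range c ≤ W ⊔ span K {p}) : ∃ x : End K V, range (c - x ^ 2) ≤ W := by
  obtain ⟨w, hw, hw₀⟩ := W.exists_mem_ne_zero_of_ne_bot hW
  have hwp : w ∉ span K {p} := fun hmem => by
    obtain ⟨s, rfl⟩ := mem_span_singleton.1 hmem
    exact hp ((W.smul_mem_iff (left_ne_zero_of_smul hw₀)).1 hw)
  obtain ⟨θ, hθW, hθp⟩ := LinearMap.exists_extend_of_notMem (0 : W →ₗ[K] K) hp 1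
  obtain ⟨μ, hμp, hμw⟩ := LinearMap.exists_extend_of_notMem (0 : span K {p} →ₗ[K] K) hwp 1
  replace hθW (u : V) (hu : u ∈ W) : θ u = 0 := LinearMap.congr_fun hθW ⟨u, hu⟩
  replace hμp : μ p = 0 := LinearMap.congr_fun hμp ⟨p, mem_span_singleton_self p⟩
  have hc_mod (v : V) : c v - θ (c v) • p ∈ W := by
    obtain ⟨u, hu, _, hsp, hus⟩ := mem_sup.1 (hc (mem_range_self c v))
    obtain ⟨s, rfl⟩ := mem_span_singleton.1 hsp
    simpa [← hus, hθW u hu, hθp] using hu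
  let x : End K V := (θ ∘ₗ c).smulRight w + μ.smulRight p
  have hμx (v : V) : μ (x v) = θ (c v) := by simp [x, hμw, hμp]
  have hx (v : V) : (c - x ^ 2) v = c v - θ (c v) • p - θ (c (x v)) • w := by
    rw [LinearMap.sub_apply, sq, End.mul_apply, ← hμx v]
    simp only [x, LinearMap.add_apply, smulRight_apply, LinearMap.comp_apply]
    abel
  refine ⟨x, ?_⟩
  rintro _ ⟨v, rfl⟩
  rw [hx]
  exact W.sub_mem (hc_mod v) (W.smul_mem _ hw)

/-- The model is multiplication by `X` on `K[X] / (X ^ r)`, where `r` is the dimension of `U`. -/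
theorem exists_isNilpotent_pow_finrank_sub_one_ne_zero [FiniteDimensional K U] [Nontrivial U] :
    ∃ g : End K U, IsNilpotent g ∧ g ^ (finrank K U - 1) ≠ 0 := by
  open Polynomial in
  set r := finrank K U
  have hmonic : (X ^ r : K[X]).Monic := monic_X_pow r
  have root_pow_eq_zero_iff (m : ℕ) : AdjoinRoot.root (X ^ r : K[X]) ^ m = 0 ↔ r ≤ m := by
    rw [← AdjoinRoot.mk_X, ← map_pow, AdjoinRoot.mk_eq_zero, pow_dvd_pow_iff X_ne_zero not_isUnit_X]
  have : FiniteDimensional K (AdjoinRoot (X ^ r : K[X])) := hmonic.finite_adjoinRoot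
  have hfinrank : finrank K (AdjoinRoot (X ^ r : K[X])) = finrank K U := by
    rw [(AdjoinRoot.powerBasis' hmonic).finrank, AdjoinRoot.powerBasis'_dim, natDegree_X_pow]
  let φ := (LinearEquiv.ofFinrankEq _ U hfinrank).conjAlgEquiv K
  have pow_eq_zero_iff (m : ℕ) :
      φ (Algebra.lmul K _ (AdjoinRoot.root (X ^ r : K[X]))) ^ m = 0 ↔ r ≤ m := by
    rw [← map_pow, ← map_pow, map_eq_zero_iff _ φ.injective,
      map_eq_zero_iff _ Algebra.lmul_injective, root_pow_eq_zero_iff]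
  have hr_pos : 0 < r := finrank_pos
  exact ⟨_, ⟨r, (pow_eq_zero_iff r).2 le_rfl⟩, (pow_eq_zero_iff _).not.2 (by lia)⟩

variable [FiniteDimensional K V]

theorem exists_ne_zero_isUnit_sub_algebraMap [Infinite K] (f : End K V) :
    ∃ t : K, t ≠ 0 ∧ IsUnit (f - algebraMap K _ t) := by
  obtain ⟨t, ht⟩ := ((End.finite_hasEigenvalue f).insert 0).infinite_compl.nonempty
  simp only [Set.mem_compl_iff, Set.mem_insert_iff, Set.mem_ofPred_eq, not_or,
    End.hasEigenvalue_iff_mem_spectrum, spectrum.mem_iff, not_not] at ht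
  exact ⟨t, ht.1, by simpa using ht.2.neg⟩

theorem exists_eq_comp_linearEquiv_of_range_eq {f g : V →ₗ[K] U} (h : range f = range g) :
    ∃ e : V ≃ₗ[K] V, f = g ∘ₗ e := by
  obtain ⟨p, hp⟩ := (ker f).exists_isCompl
  obtain ⟨q, hq⟩ := (ker g).exists_isCompl
  have hker : finrank K (ker f) = finrank K (ker g) := by
    have hf := f.finrank_range_add_finrank_ker
    have hg := g.finrank_range_add_finrank_ker
    rw [h] at hf
    lia
  let eker : ker f ≃ₗ[K] ker g := LinearEquiv.ofFinrankEq _ _ hker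
  let ecompl : p ≃ₗ[K] q := f.kerComplementEquivRange hp.symm ≪≫ₗ LinearEquiv.ofEq _ _ h ≪≫ₗ
    (g.kerComplementEquivRange hq.symm).symm
  have hecompl (v : p) : g (ecompl v) = f v :=
    congrArg Subtype.val ((g.kerComplementEquivRange hq.symm).apply_symm_apply _)
  refine ⟨(prodEquivOfIsCompl _ _ hp).symm ≪≫ₗ eker.prodCongr ecompl ≪≫ₗ
    prodEquivOfIsCompl _ _ hq, LinearMap.ext fun v => ?_⟩
  obtain ⟨⟨u, v⟩, rfl⟩ := (prodEquivOfIsCompl _ _ hp).surjective v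
  simp [hecompl]

theorem range_pow_eq_range_pow_finrank_of_le {f : End K V} {m : ℕ} (hm : finrank K V ≤ m) :
    range (f ^ m) = range (f ^ finrank K V) := by
  refine Submodule.eq_of_le_of_finrank_eq ?_ ?_
  · obtain ⟨j, rfl⟩ := Nat.exists_eq_add_of_le hm
    rw [pow_add]
    exact range_comp_le_range _ _
  · have h₁ := (f ^ m).finrank_range_add_finrank_ker
    have h₂ := (f ^ finrank K V).finrank_range_add_finrank_ker
    rw [End.ker_pow_eq_ker_pow_finrank_of_le hm] at h₁
    lia

theorem pow_eq_zero_of_comp_pow_eq_comp {π : V →ₗ[K] U} (hπ : Function.Surjective π)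
    {f : End K V} {g : End K U} {k m : ℕ} (hfg : π ∘ₗ (f ^ k) = g ∘ₗ π) (hg : IsNilpotent g)
    (hm : finrank K V ≤ k * m) : g ^ m = 0 := by
  obtain ⟨N, hN⟩ := hg
  have range_g_pow (j : ℕ) : range (g ^ j) = (range (f ^ (k * j))).map π := by
    rw [← range_comp, pow_mul, ← range_comp_of_range_eq_top (g ^ j) (range_eq_top.2 hπ),
      End.commute_pow_left_of_commute hfg.symm]
  have hmN : finrank K V ≤ k * (m + N) := hm.trans (Nat.mul_le_mul_left k (m.le_add_right N))
  rw [← range_eq_bot, range_g_pow, range_pow_eq_range_pow_finrank_of_le hm,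
    ← range_pow_eq_range_pow_finrank_of_le hmN, ← range_g_pow, pow_add, hN, mul_zero, range_zero]

theorem mul_finrank_ker_sub_one_lt_finrank [Nontrivial V] {k : ℕ} {b : End K V}
    (h : ∀ c : End K V, ∃ x y : End K V, c = x ^ k + b * y) :
    k * (finrank K (ker b) - 1) < finrank K V := by
  have hker : finrank K (ker b) = finrank K (V ⧸ range b) := by
    have h₁ := b.finrank_range_add_finrank_ker
    have h₂ := (range b).finrank_quotient_add_finrank
    lia
  rw [hker]
  obtain _ | _ := subsingleton_or_nontrivial (V ⧸ range b)
  · simpa [finrank_zero_of_subsingleton] using finrank_pos (R := K) (M := V)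
  obtain ⟨g, hg, hg_ne⟩ :=
    exists_isNilpotent_pow_finrank_sub_one_ne_zero (K := K) (U := V ⧸ range b)
  obtain ⟨c, hc⟩ :=
    projective_lifting_property (range b).mkQ (g ∘ₗ (range b).mkQ) (mkQ_surjective _)
  obtain ⟨x, y, rfl⟩ := h c
  have hxg : (range b).mkQ ∘ₗ (x ^ k) = g ∘ₗ (range b).mkQ := by
    rw [← hc, comp_add, End.mul_eq_comp, ← comp_assoc, range_mkQ_comp, zero_comp, add_zero]
  by_contra! hle
  exact hg_ne (pow_eq_zero_of_comp_pow_eq_comp (mkQ_surjective _) hxg hg hle)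

/-- Let `H` be the preimage of `W` under `c`; it has the dimension of `W`. Any `f` with kernel a
complement of `H` that maps `H` isomorphically onto `W` makes `c - t • f` injective for all but
finitely many `t`. -/
theorem exists_isUnit_range_sub_eq [Infinite K] {c : End K V} {W : Submodule K V}
    (h : range c ⊔ W = ⊤) : ∃ x : End K V, IsUnit x ∧ range (c - x) = W := by
  set H := W.comap c
  have hH : finrank K H = finrank K W := by
    have hc := finrank_range_add_finrank_ker (W.mkQ ∘ₗ c)
    have hW := W.finrank_quotient_add_finrank
    rw [range_comp, (map_mkQ_eq_top _ _).2 (sup_comm W _ ▸ h), finrank_top, ker_comp, ker_mkQ] at hc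
    exact Nat.add_left_cancel (hc.trans hW.symm)
  let e : H ≃ₗ[K] W := LinearEquiv.ofFinrankEq _ _ hH
  let cH : End K H := e.symm ∘ₗ c.restrict (p := H) (q := W) fun _ hv => hv
  obtain ⟨p, hp⟩ := H.exists_isCompl
  obtain ⟨t, ht, ht_unit⟩ := exists_ne_zero_isUnit_sub_algebraMap cH
  let f : End K V := t • W.subtype ∘ₗ e ∘ₗ H.projectionOnto p hp
  have hf : range f = W := by
    rw [LinearMap.range_smul _ _ ht, range_comp, range_comp]
    simp
  refine ⟨c - f, ?_, by rwa [sub_sub_cancel]⟩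
  rw [isUnit_iff_ker_eq_bot, ker_eq_bot']
  intro v hv
  have hvH : v ∈ H := by
    have hfv : f v ∈ W := hf ▸ mem_range_self f v
    rwa [← sub_eq_zero.1 hv] at hfv
  have hcv : c v = t • (e ⟨v, hvH⟩ : V) := by
    simpa [f, projectionOnto_apply_of_mem_left hp hvH, sub_eq_zero] using hv
  have hcH : (cH - algebraMap K _ t) ⟨v, hvH⟩ = 0 := by
    rw [LinearMap.sub_apply, sub_eq_zero, algebraMap_end_apply]
    exact e.symm_apply_eq.2 (Subtype.ext (hcv.trans (by rw [map_smul]; rfl)))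
  exact congrArg Subtype.val
    (((End.isUnit_iff _).1 ht_unit).injective (hcH.trans (map_zero _).symm))

end Field

section IsAlgClosed

variable {K V : Type*} [Field K] [IsAlgClosed K] [AddCommGroup V] [Module K V]
  [FiniteDimensional K V] {k : ℕ} {b c : End K V}

/-- The witness is a multiple of a projection onto `W`. -/
theorem exists_range_sub_pow_eq_of_range_le {W : Submodule K V} (hk : k ≠ 0) (h : range c ≤ W) :
    ∃ x : End K V, range (c - x ^ k) = W := by
  have : Infinite K := IsAlgClosed.instInfinite
  obtain ⟨q, hq⟩ := W.exists_isCompl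
  obtain ⟨t, -, ht_unit⟩ := exists_ne_zero_isUnit_sub_algebraMap
    (c.restrict (p := W) (q := W) fun v _ => h (mem_range_self c v))
  obtain ⟨s, hs⟩ := IsAlgClosed.exists_pow_nat_eq t (Nat.pos_of_ne_zero hk)
  have hpow : (s • W.projection q hq) ^ k = t • W.projection q hq := by
    rw [smul_pow, (isIdempotentElem_projection hq).pow_eq hk, hs]
  refine ⟨s • W.projection q hq, hpow ▸ le_antisymm ?_ fun w hw => ?_⟩
  · rintro _ ⟨v, rfl⟩
    exact W.sub_mem (h (mem_range_self c v)) (W.smul_mem _ (by simp))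
  · obtain ⟨v, hv⟩ := ((End.isUnit_iff _).1 ht_unit).surjective ⟨w, hw⟩
    exact ⟨v, by simpa using congrArg Subtype.val hv⟩

theorem exists_eq_pow_add_mul_pow_of_range_sub_eq (hk : (k : K) ≠ 0) {x : End K V}
    (h : range (c - x ^ k) = range b) : ∃ x y : End K V, c = x ^ k + b * y ^ k := by
  obtain ⟨e, he⟩ := exists_eq_comp_linearEquiv_of_range_eq h
  obtain ⟨y, hy⟩ := exists_pow_eq_of_isUnit K hk ((End.isUnit_iff e.toLinearMap).2 e.bijective)
  exact ⟨x, y, by rw [hy, End.mul_eq_comp, ← he, add_sub_cancel]⟩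

theorem exists_eq_pow_add_mul_pow_of_sup_eq_top_or_le (hk : (k : K) ≠ 0)
    (h : range c ⊔ range b = ⊤ ∨ range c ≤ range b) :
    ∃ x y : End K V, c = x ^ k + b * y ^ k := by
  have : Infinite K := IsAlgClosed.instInfinite
  obtain h | h := h
  · obtain ⟨_, hu, hx⟩ := exists_isUnit_range_sub_eq h
    obtain ⟨x, rfl⟩ := exists_pow_eq_of_isUnit K hk hu
    exact exists_eq_pow_add_mul_pow_of_range_sub_eq hk hx
  · obtain ⟨x, hx⟩ := exists_range_sub_pow_eq_of_range_le (k := k)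
      (by rintro rfl; exact hk Nat.cast_zero) h
    exact exists_eq_pow_add_mul_pow_of_range_sub_eq hk hx

theorem exists_eq_pow_add_mul_pow_of_finrank_ker_le_one (hk : (k : K) ≠ 0)
    (hb : finrank K (ker b) ≤ 1) (c : End K V) : ∃ x y : End K V, c = x ^ k + b * y ^ k := by
  apply exists_eq_pow_add_mul_pow_of_sup_eq_top_or_le hk
  by_contra! h
  have h₁ := finrank_lt h.1
  have h₂ := finrank_lt_finrank_of_lt (right_lt_sup.2 h.2)
  have := b.finrank_range_add_finrank_ker
  lia

theorem exists_eq_sq_add_mul_sq_of_finrank_range_eq_one (h2 : (2 : K) ≠ 0)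
    (hrange : finrank K (range b) = 1) (hker : finrank K (ker b) ≤ 2) (c : End K V) :
    ∃ x y : End K V, c = x ^ 2 + b * y ^ 2 := by
  by_cases h : range c ⊔ range b = ⊤ ∨ range c ≤ range b
  · exact exists_eq_pow_add_mul_pow_of_sup_eq_top_or_le (by exact_mod_cast h2) h
  push Not at h
  obtain ⟨p, hpc, hpb⟩ := SetLike.not_le_iff_exists.1 h.2
  have hspan : range b ⊔ span K {p} = range c ⊔ range b := by
    refine eq_of_le_of_finrank_le
      (sup_le le_sup_right (le_sup_of_le_left ((span_singleton_le_iff_mem _ _).2 hpc))) ?_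
    have h₁ := finrank_lt h.1
    have h₂ := finrank_lt_finrank_of_lt
      (left_lt_sup.2 fun hle => hpb ((span_singleton_le_iff_mem _ _).1 hle))
    have := b.finrank_range_add_finrank_ker
    lia
  have hatom : IsAtom (range b) := isAtom_iff_finrank_eq_one.2 hrange
  obtain ⟨x, hx⟩ := exists_range_sub_sq_le hatom.ne_bot hpb (le_sup_left.trans hspan.ge)
  obtain hx | hx := hatom.le_iff.1 hx
  · exact ⟨x, 0, by simpa [range_eq_bot, sub_eq_zero] using hx⟩
  · exact exists_eq_pow_add_mul_pow_of_range_sub_eq (by exact_mod_cast h2) hx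

end IsAlgClosed

theorem forall_exists_eq_units_mul_pow_add_iff {R : Type*} [Ring R] (u : Rˣ) (a : R) (k : ℕ) :
    (∀ c, ∃ x y, c = u * x ^ k + a * y ^ k) ↔ ∀ c, ∃ x y, c = x ^ k + ↑u⁻¹ * a * y ^ k := by
  rw [← u.mulLeft.forall_congr_right]
  refine forall_congr' fun c => exists₂_congr fun x y => ?_
  rw [Units.mulLeft_apply, ← u.mul_right_inj (b := c), mul_add, mul_assoc, u.mul_inv_cancel_left]

theorem stmt_16_general {K V : Type*} [Field K] [IsAlgClosed K] [AddCommGroup V] [Module K V]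
    (hV : finrank K V = 3) {k : ℕ} (hk : (k : K) ≠ 0) {a₁ : End K V} (ha₁ : IsUnit a₁)
    (a₂ : End K V) :
    (∀ c : End K V, ∃ x₁ x₂ : End K V, c = a₁ * x₁ ^ k + a₂ * x₂ ^ k) ↔
      k * (finrank K (ker a₂) - 1) < 3 := by
  have : FiniteDimensional K V := finite_of_finrank_pos (by lia)
  have : Nontrivial V := nontrivial_of_finrank_pos (R := K) (by lia)
  obtain ⟨u, rfl⟩ := ha₁
  set b : End K V := ↑u⁻¹ * a₂ with hb
  have hker : ker a₂ = ker b :=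
    (ker_comp_of_ker_eq_bot _ ((isUnit_iff_ker_eq_bot _).1 u⁻¹.isUnit)).symm
  rw [forall_exists_eq_units_mul_pow_add_iff, ← hb, hker]
  refine ⟨fun h => hV ▸ mul_finrank_ker_sub_one_lt_finrank fun c => ?_, fun h c => ?_⟩
  · obtain ⟨x, y, hc⟩ := h c
    exact ⟨x, y ^ k, hc⟩
  rcases le_or_gt (finrank K (ker b)) 1 with hr | hr
  · exact exists_eq_pow_add_mul_pow_of_finrank_ker_le_one hk hr c
  have hk_le : k ≤ k * (finrank K (ker b) - 1) := Nat.le_mul_of_pos_right k (by lia)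
  have hk_lt : k < 3 := by lia
  interval_cases k
  · exact absurd Nat.cast_zero hk
  · exact ⟨c, 0, by simp⟩
  · have := b.finrank_range_add_finrank_ker
    exact exists_eq_sq_add_mul_sq_of_finrank_range_eq_one hk (by lia) (by lia) c

/-- For `A₁ ∈ GL₃(F)`, `A₂ ∈ M₃(F)` with `r₀ = nullity(A₂)`, the map
`(X₁,X₂) ↦ A₁ X₁^k + A₂ X₂^k` is surjective on `M₃(F)` iff `k (r₀ - 1) < 3`. -/
theorem stmt_16 {F : Type*} [Field F] [IsAlgClosed F] [CharZero F]
    (k : ℕ) (hk : 2 ≤ k)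
    (A₁ A₂ : Matrix (Fin 3) (Fin 3) F) (hA₁ : IsUnit A₁)
    (r₀ : ℕ) (hr₀ : r₀ = Module.finrank F (LinearMap.ker A₂.mulVecLin)) :
    (∀ C : Matrix (Fin 3) (Fin 3) F,
      ∃ X₁ X₂ : Matrix (Fin 3) (Fin 3) F, C = A₁ * X₁ ^ k + A₂ * X₂ ^ k) ↔
    k * (r₀ - 1) < 3 := by
  let e := Matrix.toLinAlgEquiv' (R := F) (n := Fin 3)
  have h := stmt_16_general (by simp) (Nat.cast_ne_zero.2 (by lia)) (hA₁.map e) (e A₂) (k := k)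
  simp only [e.surjective.forall, e.surjective.exists, ← map_pow, ← map_mul, ← map_add,
    e.injective.eq_iff] at h
  rwa [hr₀]
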